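/- Suppose f(z) = ∑_{n≥0} c_n zⁿ with all c_n ∈ ℤ, the series converges for |z| < 1, and f extends to a meromorphic (holomorphic on an open set strictly containing the closed unit disk minus finitely many points, say) function as a solution of a linear ODE f'(z) = A(z) f(z) with A(z) a matrix of rational functions regular for |z| < 1 (vector-valued version). Then f is a rational function. (Corollary of the Carlson–Pólya theorem: a power series with integer coefficients convergent on the unit disk that continues analytically past the unit circle is rational.) -/

import Mathlib

open Filter Topology

/-- Taylor coefficient at `0`. -/
noncomputable def tco (k : ℕ) (h : ℂ → ℂ) : ℂ := iteratedDeriv k h 0 / (k.factorial : ℂ)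

/-- Iterated difference quotient at `0`. -/
noncomputable def ids (k : ℕ) (h : ℂ → ℂ) : ℂ → ℂ := (Function.swap dslope 0)^[k] h

lemma ids_zero (h : ℂ → ℂ) : ids 0 h = h := rfl

lemma ids_succ (k : ℕ) (h : ℂ → ℂ) : ids (k+1) h = dslope (ids k h) 0 := by
  simp [ids, Function.iterate_succ_apply', Function.swap]

lemma ids_succ' (k : ℕ) (h : ℂ → ℂ) : ids (k+1) h = ids k (dslope h 0) := by
  simp [ids, Function.iterate_succ_apply, Function.swap]

lemma ids_ids (k l : ℕ) (h : ℂ → ℂ) : ids k (ids l h) = ids (k + l) h := by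
  simp [ids, Function.iterate_add_apply]

lemma dslope_analytic {h : ℂ → ℂ} (hh : AnalyticAt ℂ h 0) : AnalyticAt ℂ (dslope h 0) 0 := by
  obtain ⟨p, hp⟩ := hh
  exact ⟨_, hp.has_fpower_series_dslope_fslope⟩

lemma ids_analytic {h : ℂ → ℂ} (hh : AnalyticAt ℂ h 0) (k : ℕ) : AnalyticAt ℂ (ids k h) 0 := by
  induction k with
  | zero => exact hh
  | succ k ih => rw [ids_succ]; exact dslope_analytic ih

lemma ids_diff {h : ℂ → ℂ} {s : Set ℂ} (hs : s ∈ 𝓝 (0:ℂ)) (hh : DifferentiableOn ℂ h s) (k : ℕ) :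
    DifferentiableOn ℂ (ids k h) s := by
  induction k with
  | zero => exact hh
  | succ k ih => rw [ids_succ]; exact (Complex.differentiableOn_dslope hs).2 ih

lemma tco_eq_coeff {h : ℂ → ℂ} {p : FormalMultilinearSeries ℂ ℂ ℂ} (hp : HasFPowerSeriesAt h p 0)
    (k : ℕ) : tco k h = p.coeff k := by
  have h1 := (AnalyticAt.hasFPowerSeriesAt ⟨p, hp⟩).eq_formalMultilinearSeries hp
  rw [← h1, FormalMultilinearSeries.coeff_ofScalars]; rfl

lemma tco_succ {h : ℂ → ℂ} (hh : AnalyticAt ℂ h 0) (k : ℕ) :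
    tco (k+1) h = tco k (dslope h 0) := by
  obtain ⟨p, hp⟩ := hh
  rw [tco_eq_coeff hp, tco_eq_coeff hp.has_fpower_series_dslope_fslope,
    FormalMultilinearSeries.coeff_fslope]

lemma tco_zero (h : ℂ → ℂ) : tco 0 h = h 0 := by simp [tco]

lemma tco_eq_ids {h : ℂ → ℂ} (hh : AnalyticAt ℂ h 0) (k : ℕ) : tco k h = ids k h 0 := by
  induction k generalizing h with
  | zero => simp [tco_zero, ids_zero]
  | succ k ih => rw [tco_succ hh, ids_succ', ih (dslope_analytic hh)]

lemma tco_congr {h g : ℂ → ℂ} (hg : h =ᶠ[𝓝 0] g) (k : ℕ) : tco k h = tco k g := by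
  simp [tco, hg.iteratedDeriv_eq k]

lemma tco_add {h g : ℂ → ℂ} (hh : AnalyticAt ℂ h 0) (hg : AnalyticAt ℂ g 0) (k : ℕ) :
    tco k (fun z => h z + g z) = tco k h + tco k g := by
  simp only [tco]
  rw [iteratedDeriv_fun_add hh.contDiffAt hg.contDiffAt, add_div]

lemma tco_const_mul (c : ℂ) (h : ℂ → ℂ) (k : ℕ) :
    tco k (fun z => c * h z) = c * tco k h := by
  simp only [tco]
  rw [iteratedDeriv_const_mul_field, mul_div_assoc]

lemma tco_sum {ι : Type*} (s : Finset ι) {h : ι → ℂ → ℂ} (hh : ∀ i ∈ s, AnalyticAt ℂ (h i) 0)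
    (k : ℕ) : tco k (fun z => ∑ i ∈ s, h i z) = ∑ i ∈ s, tco k (h i) := by
  simp only [tco]
  rw [iteratedDeriv_fun_sum (fun i hi => (hh i hi).contDiffAt), Finset.sum_div]

lemma dslope_mul_id {h : ℂ → ℂ} (hh : ContinuousAt h 0) : dslope (fun z => z * h z) 0 = h := by
  funext z
  by_cases hz : z = 0
  · subst hz
    rw [dslope_same]
    have : HasDerivAt (fun z => z * h z) (h 0) 0 := by
      rw [hasDerivAt_iff_tendsto_slope]
      have h2 : Tendsto h (𝓝[≠] 0) (𝓝 (h 0)) := hh.mono_left nhdsWithin_le_nhds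
      refine h2.congr' ?_
      filter_upwards [self_mem_nhdsWithin] with y hy
      have : y ≠ 0 := hy
      simp [slope_def_field]; field_simp
    exact this.deriv
  · rw [dslope_of_ne _ hz, slope_def_field]; simp; field_simp

lemma tco_pow_mul_lt {h : ℂ → ℂ} (hh : AnalyticAt ℂ h 0) (k n : ℕ) (hk : k < n) :
    tco k (fun z => z ^ n * h z) = 0 := by
  induction n generalizing k with
  | zero => omega
  | succ n ih =>
    have h1 : (fun z => z ^ (n+1) * h z) = (fun z => z * (z ^ n * h z)) := by funext z; ring
    have ha : AnalyticAt ℂ (fun z => z ^ n * h z) 0 := by fun_prop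
    rw [h1]
    cases k with
    | zero => simp [tco_zero]
    | succ k =>
      rw [tco_succ (by fun_prop), dslope_mul_id ha.continuousAt]
      exact ih k (by omega)

lemma tco_pow_mul_eq {h : ℂ → ℂ} (hh : AnalyticAt ℂ h 0) (n : ℕ) :
    tco n (fun z => z ^ n * h z) = h 0 := by
  induction n with
  | zero => simp [tco_zero]
  | succ n ih =>
    have h1 : (fun z => z ^ (n+1) * h z) = (fun z => z * (z ^ n * h z)) := by funext z; ring
    have ha : AnalyticAt ℂ (fun z => z ^ n * h z) 0 := by fun_prop
    rw [h1, tco_succ (by fun_prop), dslope_mul_id ha.continuousAt]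
    exact ih

lemma eq_sum_ids (h : ℂ → ℂ) (n : ℕ) (x : ℂ) :
    h x = ∑ i ∈ Finset.range n, ids i h 0 * x ^ i + x ^ n * ids n h x := by
  induction n with
  | zero => simp [ids_zero]
  | succ n ih =>
    have := sub_smul_dslope (ids n h) 0 x
    rw [← ids_succ] at this
    simp at this
    rw [Finset.sum_range_succ, ih]
    have h2 : ids n h x = ids n h 0 + x * ids (n+1) h x := by rw [this]; ring
    rw [h2]; ring

/-- Composition formula. -/
lemma tco_comp {h ψ : ℂ → ℂ} (hh : AnalyticAt ℂ h 0) (hψ : AnalyticAt ℂ ψ 0) (n k : ℕ) (hk : k < n) :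
    tco k (fun u => h (u * ψ u)) =
      ∑ i ∈ Finset.range n, tco k (fun u => (u * ψ u) ^ i) * tco i h := by
  have h1 : (fun u => h (u * ψ u)) = fun u =>
      (∑ i ∈ Finset.range n, ids i h 0 * (u * ψ u) ^ i)
        + u ^ n * (ψ u ^ n * ids n h (u * ψ u)) := by
    funext u
    rw [eq_sum_ids h n (u * ψ u)]; ring
  have hc : AnalyticAt ℂ (fun u => ids n h (u * ψ u)) 0 := by
    apply AnalyticAt.fun_comp (g := ids n h)
    · simpa using ids_analytic hh n
    · fun_prop
  rw [h1, tco_add (by fun_prop) (by fun_prop), tco_pow_mul_lt (by fun_prop) k n hk, add_zero,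
    tco_sum _ (by intros; fun_prop)]
  refine Finset.sum_congr rfl fun i _ => ?_
  rw [tco_const_mul, tco_eq_ids hh, mul_comm]

lemma tco_bound {h : ℂ → ℂ} {s : Set ℂ} {C : ℝ} (hs : Metric.closedBall 0 1 ⊆ s)
    (hh : DifferentiableOn ℂ h s) (hC : ∀ z ∈ Metric.sphere (0:ℂ) 1, ‖h z‖ ≤ C) (k : ℕ) :
    ‖tco k h‖ ≤ C := by
  have h1 := Complex.norm_iteratedDeriv_le_of_forall_mem_sphere_norm_le (c := 0) (R := 1) k one_pos
    ((hh.mono (by rw [closure_ball _ one_ne_zero]; exact hs)).diffContOnCl) hC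
  have : (0:ℝ) < k.factorial := by exact_mod_cast k.factorial_pos
  rw [tco, norm_div, Complex.norm_natCast, div_le_iff₀ this]
  simpa [mul_comm] using h1
/-- A map of the closed unit disk into a slightly enlarged disk, with derivative `> 1` at `0`. -/
lemma exists_psi (ε : ℝ) (hε : 0 < ε) (hε1 : ε ≤ 1) :
    ∃ ψ : ℂ → ℂ, ∃ s : Set ℂ, IsOpen s ∧ Metric.closedBall 0 1 ⊆ s ∧ DifferentiableOn ℂ ψ s ∧
      1 < ‖ψ 0‖ ∧ (∀ u : ℂ, ‖u‖ ≤ 1 → ψ u ≠ 0) ∧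
      ∀ u : ℂ, ‖u‖ ≤ 1 → ‖u * ψ u‖ < 1 ∨ ‖u * ψ u - 1‖ < ε := by
  set e : ℝ := ε / 2 with he
  set σ : ℝ := e ^ 2 / 200 with hσ
  have he0 : 0 < e := by positivity
  have he1 : e ≤ 1 / 2 := by linarith
  have hσ0 : 0 < σ := by positivity
  have hσe : σ ≤ e / 400 := by rw [hσ]; nlinarith
  set ρ : ℝ := 1 - σ with hρ
  have hρ0 : 0 < ρ := by linarith
  set B : ℝ := 1 + 3 / 2 / σ with hB
  have hB1 : 1 ≤ B := by rw [hB]; have : 0 < 3 / 2 / σ := by positivity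
                         linarith
  set t : ℝ := σ / (10 * B ^ 2) with ht
  have ht0 : 0 < t := by positivity
  have htB2 : t * B ^ 2 = σ / 10 := by rw [ht]; field_simp
  have htB : t * B ≤ σ / 10 := by rw [← htB2]; nlinarith
  set k : ℂ → ℂ := fun u => 3 / 2 / (1 - ρ * u) with hk
  have hden : ∀ u : ℂ, ‖u‖ ≤ 1 → σ ≤ ‖1 - ρ * u‖ := by
    intro u hu
    have h1 : ‖(1:ℂ)‖ - ‖(ρ:ℂ) * u‖ ≤ ‖1 - ρ * u‖ := norm_sub_norm_le _ _
    have h2 : ‖(ρ:ℂ) * u‖ ≤ ρ := by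
      rw [norm_mul, Complex.norm_real, Real.norm_of_nonneg hρ0.le]; nlinarith
    rw [norm_one] at h1
    linarith
  have hkB : ∀ u : ℂ, ‖u‖ ≤ 1 → ‖k u - 1‖ ≤ B := by
    intro u hu
    have h1 : ‖k u‖ ≤ 3 / 2 / σ := by
      simp only [hk]
      rw [norm_div]
      have : ‖(3/2 : ℂ)‖ = 3 / 2 := by norm_num
      rw [this]
      gcongr
      exact hden u hu
    calc ‖k u - 1‖ ≤ ‖k u‖ + ‖(1:ℂ)‖ := norm_sub_le _ _
      _ ≤ B := by rw [norm_one, hB]; linarith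
  have hw : ∀ u : ℂ, ‖u‖ ≤ 1 → ‖(t:ℂ) * (k u - 1)‖ ≤ σ / 10 := by
    intro u hu
    rw [norm_mul, Complex.norm_real, Real.norm_of_nonneg ht0.le]
    exact (mul_le_mul_of_nonneg_left (hkB u hu) ht0.le).trans htB
  refine ⟨fun u => 1 + t * (k u - 1), {u | 1 - (ρ:ℂ) * u ≠ 0}, ?_, ?_, ?_, ?_, ?_, ?_⟩
  · exact isOpen_ne_fun (by fun_prop) (by fun_prop)
  · intro u hu h0
    have := hden u (by simpa using hu)
    rw [h0, norm_zero] at this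
    linarith
  · intro u hu
    have : 1 - (ρ:ℂ) * u ≠ 0 := hu
    apply DifferentiableAt.differentiableWithinAt
    simp only [hk]
    fun_prop (disch := assumption)
  · have : (1:ℂ) + t * (k 0 - 1) = ((1 + t / 2 : ℝ) : ℂ) := by
      simp only [hk]; push_cast; ring
    simp only [this]
    rw [Complex.norm_real, Real.norm_of_nonneg (by positivity)]
    linarith
  · intro u hu h0
    have h1 := hw u hu
    have : (t:ℂ) * (k u - 1) = -1 := by linear_combination h0
    rw [this] at h1
    simp at h1
    linarith
  · intro u hu
    by_cases hc : ‖u - 1‖ < e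
    · right
      have : u * (1 + t * (k u - 1)) - 1 = (u - 1) + u * (t * (k u - 1)) := by ring
      rw [this]
      have h3 : ‖u * (t * (k u - 1))‖ ≤ σ / 10 := by
        rw [norm_mul]
        calc ‖u‖ * ‖(t:ℂ) * (k u - 1)‖ ≤ 1 * (σ / 10) :=
              mul_le_mul hu (hw u hu) (norm_nonneg _) zero_le_one
          _ = _ := one_mul _
      have := norm_add_le (u - 1) (u * (t * (k u - 1)))
      linarith
    · left
      push Not at hc
      by_cases hu2 : ‖u‖ ^ 2 ≤ 1 - σ
      · have h1 : ‖1 + (t:ℂ) * (k u - 1)‖ ≤ 1 + σ / 10 := by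
          refine (norm_add_le _ _).trans ?_
          rw [norm_one]; linarith [hw u hu]
        have h2 : ‖u * (1 + t * (k u - 1))‖ ^ 2 < 1 := by
          rw [norm_mul, mul_pow]
          calc ‖u‖ ^ 2 * ‖1 + (t:ℂ) * (k u - 1)‖ ^ 2 ≤ (1 - σ) * (1 + σ / 10) ^ 2 := by
                gcongr
            _ < 1 := by nlinarith [mul_pos hσ0 hσ0, mul_pos (mul_pos hσ0 hσ0) hσ0]
        exact (sq_lt_one_iff₀ (norm_nonneg _)).1 h2
      · push Not at hu2
        -- real part of k
        have hre : (k u - 1).re ≤ - (3 / 16) := by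
          set D := ‖1 - (ρ:ℂ) * u‖ with hD
          have hDe : e / 2 ≤ D := by
            have h1 : ‖u - 1‖ ≤ ‖1 - (ρ:ℂ) * u‖ + ‖(σ:ℂ) * u‖ := by
              have : u - 1 = -(1 - (ρ:ℂ) * u) + σ * u := by rw [hρ]; push_cast; ring
              rw [this]
              refine (norm_add_le _ _).trans ?_
              rw [norm_neg]
            have h2 : ‖(σ:ℂ) * u‖ ≤ σ := by
              rw [norm_mul, Complex.norm_real, Real.norm_of_nonneg hσ0.le]; nlinarith
            linarith
          have hD2 : D ^ 2 = (1 - ρ * u.re) ^ 2 + (ρ * u.im) ^ 2 := by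
            rw [hD, Complex.sq_norm, Complex.normSq_apply]; simp; ring
          have hu3 : ‖u‖ ^ 2 = u.re ^ 2 + u.im ^ 2 := by
            rw [Complex.sq_norm, Complex.normSq_apply]; ring
          have hkre : (k u).re = 3 / 2 * (1 - ρ * u.re) / D ^ 2 := by
            simp only [hk]
            have hn : Complex.normSq (1 - (ρ:ℂ) * u) = D ^ 2 := by rw [hD, Complex.sq_norm]
            have h32 : (3/2 : ℂ) = ((3/2 : ℝ) : ℂ) := by push_cast; ring
            rw [h32, Complex.div_re, hn]
            simp
          have hDp : 0 < D ^ 2 := pow_pos (by linarith) 2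
          have key : 3 / 2 * (1 - ρ * u.re) ≤ 13 / 16 * D ^ 2 := by
            have h5 : 2 * (1 - ρ * u.re) = D ^ 2 + (1 - ρ ^ 2 * ‖u‖ ^ 2) := by
              rw [hD2, hu3]; ring
            have h6 : (1 - σ) ^ 3 ≤ ρ ^ 2 * ‖u‖ ^ 2 := by
              
              calc (1 - σ) ^ 3 = ρ ^ 2 * (1 - σ) := by rw [hρ]; ring
                _ ≤ ρ ^ 2 * ‖u‖ ^ 2 := mul_le_mul_of_nonneg_left hu2.le (sq_nonneg _)
            have h7 : 1 - 3 * σ ≤ (1 - σ) ^ 3 := by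
              have : 0 ≤ σ ^ 2 * (3 - σ) := mul_nonneg (sq_nonneg _) (by linarith)
              have h' : (1 - σ) ^ 3 = 1 - 3 * σ + σ ^ 2 * (3 - σ) := by ring
              linarith
            have h8 : e ^ 2 / 4 ≤ D ^ 2 := by
              have := pow_le_pow_left₀ (by positivity : 0 ≤ e / 2) hDe 2
              linarith [this, (by ring : (e / 2) ^ 2 = e ^ 2 / 4)]
            have h9 : 1 - ρ ^ 2 * ‖u‖ ^ 2 ≤ D ^ 2 / 12 := by
              have : 3 * σ = 3 * e ^ 2 / 200 := by rw [hσ]; ring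
              have h10 : 0 < e ^ 2 := by positivity
              linarith
            linarith
          have : (k u).re ≤ 13 / 16 := by
            rw [hkre, div_le_iff₀ hDp]; exact key
          simp; linarith
        have h2 : ‖1 + (t:ℂ) * (k u - 1)‖ ^ 2 < 1 := by
          have h4 : ‖1 + (t:ℂ) * (k u - 1)‖ ^ 2 =
              1 + 2 * t * (k u - 1).re + t ^ 2 * ‖k u - 1‖ ^ 2 := by
            rw [Complex.sq_norm, Complex.sq_norm, Complex.normSq_apply, Complex.normSq_apply]
            simp; ring
          rw [h4]
          have h5 : ‖k u - 1‖ ^ 2 ≤ B ^ 2 := by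
            have := hkB u hu
            gcongr
          have h6 : t ^ 2 * ‖k u - 1‖ ^ 2 ≤ t * (σ / 10) := by
            calc t ^ 2 * ‖k u - 1‖ ^ 2 ≤ t ^ 2 * B ^ 2 := by gcongr
              _ = t * (t * B ^ 2) := by ring
              _ = _ := by rw [htB2]
          have h7 : 2 * t * (k u - 1).re ≤ 2 * t * (-(3/16)) :=
            mul_le_mul_of_nonneg_left hre (by positivity)
          have h8 : t * (σ / 10) ≤ t * (1 / 10) :=
            mul_le_mul_of_nonneg_left (by linarith) ht0.le
          linarith
        have h3 := (sq_lt_one_iff₀ (norm_nonneg _)).1 h2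
        rw [norm_mul]
        exact (mul_le_of_le_one_left (norm_nonneg _) hu).trans_lt h3
lemma tco_dslope {f : ℂ → ℂ} {x : ℂ} (hx : x ≠ 0) (hf : AnalyticAt ℂ f 0)
    (hh : AnalyticAt ℂ (dslope f x) 0) (j : ℕ) : tco j (dslope f x) = ids (j+1) f x := by
  induction j with
  | zero =>
    rw [tco_zero, ids_succ, ids_zero, dslope_of_ne _ hx, dslope_of_ne _ hx.symm, slope_comm]
  | succ j ih =>
    have h1 : f = fun y => y * dslope f x y + ((-x) * dslope f x y + f x) := by
      funext y
      have := sub_smul_dslope f x y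
      rw [smul_eq_mul] at this
      linear_combination -this
    have hc : tco (j+1) (fun _ : ℂ => f x) = 0 := by
      simp [tco, iteratedDeriv_const]
    have h2 : tco (j+1) f = tco j (dslope f x) - x * tco (j+1) (dslope f x) := by
      conv_lhs => rw [h1]
      rw [tco_add (by fun_prop) (by fun_prop), tco_add (by fun_prop) (by fun_prop), hc,
        tco_const_mul, tco_succ (by fun_prop), dslope_mul_id hh.continuousAt]
      ring
    have h3 := sub_smul_dslope (ids (j+1) f) 0 x
    rw [← ids_succ, sub_zero, smul_eq_mul, ← tco_eq_ids hf, h2, ih] at h3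
    apply mul_left_cancel₀ hx
    linear_combination -h3

lemma dslope_bound {f : ℂ → ℂ} {D K : Set ℂ} (hD : IsOpen D) (hf : DifferentiableOn ℂ f D)
    (hK : IsCompact K) (hKD : K ⊆ D) : ∃ M : ℝ, ∀ x ∈ K, ∀ y ∈ K, ‖dslope f x y‖ ≤ M := by
  have hl : LocallyLipschitzOn K f := by
    intro x hx
    have : ContDiffAt ℂ 1 f x := (hf.analyticAt (hD.mem_nhds (hKD hx))).contDiffAt
    obtain ⟨C, t, ht, h⟩ := this.exists_lipschitzOnWith
    exact ⟨C, t, mem_nhdsWithin_of_mem_nhds ht, h⟩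
  obtain ⟨C, hC⟩ := hl.exists_lipschitzOnWith_of_compact hK
  obtain ⟨M, hM⟩ := hK.exists_bound_of_continuousOn
    ((hf.deriv hD).continuousOn.mono hKD)
  refine ⟨max C M, fun x hx y hy => ?_⟩
  by_cases h : y = x
  · subst h
    rw [dslope_same]
    exact (hM y hy).trans (le_max_right _ _)
  · rw [dslope_of_ne _ h, slope_def_field, norm_div]
    have h0 : 0 < ‖y - x‖ := norm_pos_iff.2 (sub_ne_zero.2 h)
    rw [div_le_iff₀ h0]
    have h1 := hC.dist_le_mul y hy x hx
    rw [dist_eq_norm, dist_eq_norm] at h1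
    exact h1.trans (mul_le_mul_of_nonneg_right (le_max_left _ _) h0.le)

lemma growth (M lam : ℝ) (hl : 1 < lam) (hM : 0 ≤ M) :
    ∃ N : ℕ, ∀ n ≥ N, (n.factorial : ℝ) * M ^ n < lam ^ (n * (n - 1)) := by
  have h1 := tendsto_pow_const_div_const_pow_of_one_lt 1 hl
  have h2 : ∀ᶠ n : ℕ in atTop, (n:ℝ) ^ 1 / lam ^ n < 1 / (lam * (M + 1)) :=
    h1.eventually_lt_const (by positivity)
  obtain ⟨N, hN⟩ := eventually_atTop.1 h2
  refine ⟨N + 1, fun n hn => ?_⟩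
  have h3 := hN n (by omega)
  have hlp : 0 < lam := by linarith
  rw [pow_one, div_lt_div_iff₀ (by positivity) (by positivity)] at h3
  have h4 : (n:ℝ) * (M + 1) < lam ^ (n - 1) := by
    obtain ⟨k, rfl⟩ : ∃ k, n = k + 1 := ⟨n - 1, by omega⟩
    rw [pow_succ] at h3
    simp only [Nat.add_sub_cancel]
    nlinarith
  have hn1 : (1:ℝ) ≤ n := by exact_mod_cast (by omega : 1 ≤ n)
  calc (n.factorial : ℝ) * M ^ n ≤ (n:ℝ) ^ n * (M + 1) ^ n := by
        gcongr
        · exact_mod_cast Nat.factorial_le_pow n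
        · linarith
    _ = ((n:ℝ) * (M + 1)) ^ n := (mul_pow _ _ _).symm
    _ < (lam ^ (n - 1)) ^ n := pow_lt_pow_left₀ h4 (by positivity) (by omega)
    _ = _ := by rw [← pow_mul, mul_comm]

lemma hankel_vanish (c : ℕ → ℤ) (f : ℂ → ℂ) (ζ : ℂ) (hζ : ‖ζ‖ = 1) (ε : ℝ) (hε : 0 < ε)
    (hf : DifferentiableOn ℂ f (Metric.ball 0 1 ∪ Metric.ball ζ ε))
    (hsum : ∀ z : ℂ, ‖z‖ < 1 → HasSum (fun n : ℕ => (c n : ℂ) * z ^ n) (f z)) :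
    ∃ N, ∀ n ≥ N, (Matrix.of fun i j : Fin n => (c (i + j + 1) : ℂ)).det = 0 := by
  obtain ⟨ψ₀, s, hso, hs, hψd, hψ0, hψne, hψD⟩ :=
    exists_psi (min ε 1) (lt_min hε one_pos) (min_le_right _ _)
  set ψ : ℂ → ℂ := fun u => ζ * ψ₀ u with hψ
  set D : Set ℂ := Metric.ball 0 1 ∪ Metric.ball ζ ε with hD
  have hDo : IsOpen D := Metric.isOpen_ball.union Metric.isOpen_ball
  have h0D : D ∈ 𝓝 (0:ℂ) := hDo.mem_nhds (Or.inl (by simp))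
  have hζ0 : ζ ≠ 0 := by intro h; simp [h] at hζ
  set cb : Set ℂ := Metric.closedBall 0 1 with hcb
  have hφmaps : Set.MapsTo (fun u => u * ψ u) cb D := by
    intro u hu
    have hu' : ‖u‖ ≤ 1 := by simpa [hcb] using hu
    rcases hψD u hu' with h | h
    · left
      simp only [hψ, Metric.mem_ball, dist_zero_right]
      rw [mul_left_comm, norm_mul, hζ, one_mul]; exact h
    · right
      simp only [hψ, Metric.mem_ball, dist_eq_norm]
      have : u * (ζ * ψ₀ u) - ζ = ζ * (u * ψ₀ u - 1) := by ring
      rw [this, norm_mul, hζ, one_mul]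
      exact h.trans_le (min_le_left _ _)
  have hψa : AnalyticAt ℂ ψ 0 := by
    have : AnalyticAt ℂ ψ₀ 0 := hψd.analyticAt (hso.mem_nhds (hs (by simp [hcb])))
    simp only [hψ]; fun_prop
  have hψdiff : DifferentiableOn ℂ (fun u => u * ψ u) cb := by
    have : DifferentiableOn ℂ ψ₀ cb := hψd.mono hs
    simp only [hψ]; fun_prop
  have hfa : AnalyticAt ℂ f 0 := hf.analyticAt h0D
  have htc : ∀ n, tco n f = c n := by
    intro n
    have hp : HasFPowerSeriesAt f
        (FormalMultilinearSeries.ofScalars ℂ (fun n => (c n : ℂ))) 0 := by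
      rw [hasFPowerSeriesAt_iff]
      filter_upwards [Metric.ball_mem_nhds (0:ℂ) one_pos] with z hz
      have := hsum z (by simpa using hz)
      simpa [FormalMultilinearSeries.coeff_ofScalars, mul_comm] using this
    rw [tco_eq_coeff hp, FormalMultilinearSeries.coeff_ofScalars]
  -- the bound
  set K := (fun u => u * ψ u) '' cb with hKdef
  have hK : IsCompact K := (isCompact_closedBall _ _).image_of_continuousOn hψdiff.continuousOn
  obtain ⟨M, hM⟩ := dslope_bound hDo hf hK hφmaps.image_subset
  have hM0 : 0 ≤ M := by
    have h0K : (0:ℂ) ∈ K := ⟨0, by simp [hcb], by simp⟩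
    exact (norm_nonneg _).trans (hM 0 h0K 0 h0K)
  set T : ℕ → ℕ → ℂ := fun k i => tco k (fun u => (u * ψ u) ^ i) with hT
  have hTlow : ∀ k i, k < i → T k i = 0 := by
    intro k i hki
    simp only [hT, mul_pow]
    exact tco_pow_mul_lt (by fun_prop) k i hki
  have hTdiag : ∀ k, T k k = ψ 0 ^ k := by
    intro k
    simp only [hT, mul_pow]
    exact tco_pow_mul_eq (h := fun u => ψ u ^ k) (by fun_prop) k
  have hentry : ∀ n k l, k < n → l < n → ‖∑ i ∈ Finset.range n, T k i *
      ∑ j ∈ Finset.range n, T l j * (c (i + j + 1) : ℂ)‖ ≤ M := by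
    intro n k l hk hl
    set W : ℂ → ℂ := fun x => ∑ j ∈ Finset.range n, T l j * ids (j+1) f x with hW
    have hWd : DifferentiableOn ℂ W D := by
      have : ∀ j, DifferentiableOn ℂ (ids j f) D := ids_diff h0D hf
      simp only [hW]
      fun_prop
    have hWa : AnalyticAt ℂ W 0 := hWd.analyticAt h0D
    have hWc : ∀ i, tco i W = ∑ j ∈ Finset.range n, T l j * (c (i + j + 1) : ℂ) := by
      intro i
      have ha : ∀ j, AnalyticAt ℂ (ids j f) 0 := ids_analytic hfa
      simp only [hW]
      rw [tco_sum _ (by intros; fun_prop)]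
      refine Finset.sum_congr rfl fun j _ => ?_
      rw [tco_const_mul, tco_eq_ids (ha _), ids_ids, ← tco_eq_ids hfa, htc]
      rfl
    have h1 := tco_comp hWa hψa n k hk
    simp only [hWc] at h1
    rw [← h1]
    refine tco_bound (s := cb) subset_rfl ?_ ?_ k
    · exact hWd.comp hψdiff hφmaps
    · intro u hu
      have hu1 : ‖u‖ = 1 := by simpa using hu
      have hucb : u ∈ cb := by simp [hcb, hu1]
      have hxK : u * ψ u ∈ K := ⟨u, hucb, rfl⟩
      have hxD : u * ψ u ∈ D := hφmaps hucb
      have hx0 : u * ψ u ≠ 0 :=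
        mul_ne_zero (by intro h; simp [h] at hu1) (mul_ne_zero hζ0 (hψne u hu1.le))
      have hdd : DifferentiableOn ℂ (dslope f (u * ψ u)) D :=
        (Complex.differentiableOn_dslope (hDo.mem_nhds hxD)).2 hf
      have hda := hdd.analyticAt h0D
      have h2 := tco_comp hda hψa n l hl
      simp only [tco_dslope hx0 hfa hda] at h2
      have h3 : W (u * ψ u) = tco l (fun v => dslope f (u * ψ u) (v * ψ v)) := h2.symm
      rw [h3]
      refine tco_bound (s := cb) subset_rfl (hdd.comp hψdiff hφmaps) ?_ l
      intro v hv
      exact hM _ hxK _ ⟨v, Metric.sphere_subset_closedBall hv, rfl⟩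
  have hlam : 1 < ‖ψ 0‖ := by rw [show ψ 0 = ζ * ψ₀ 0 from rfl, norm_mul, hζ, one_mul]; exact hψ0
  obtain ⟨N, hN⟩ := growth M ‖ψ 0‖ hlam hM0
  refine ⟨N, fun n hn => ?_⟩
  set H : Matrix (Fin n) (Fin n) ℂ := Matrix.of fun i j : Fin n => (c (i + j + 1) : ℂ) with hH
  set TT : Matrix (Fin n) (Fin n) ℂ := Matrix.of fun i j : Fin n => T i j with hTT
  have hdetT : TT.det = ψ 0 ^ (∑ i ∈ Finset.range n, i) := by
    rw [Matrix.det_of_isLowerTriangular]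
    · simp only [hTT, Matrix.of_apply, hTdiag]
      rw [← Finset.prod_pow_eq_pow_sum, Finset.prod_range]
    · intro i j hij
      exact hTlow _ _ hij
  have hg : ∀ k l, ‖(TT * (H * TT.transpose)) k l‖ ≤ M := by
    intro k l
    refine le_trans (le_of_eq ?_) (hentry n k l k.2 l.2)
    congr 1
    simp only [Matrix.mul_apply, Matrix.transpose_apply, hTT, hH, Matrix.of_apply, Finset.sum_range]
    refine Finset.sum_congr rfl fun i _ => ?_
    congr 1
    exact Finset.sum_congr rfl fun j _ => mul_comm _ _
  have hdet := Matrix.det_le (A := TT * (H * TT.transpose)) (abv := NormedField.toAbsoluteValue ℂ)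
    (x := M) hg
  simp only [Matrix.det_mul, Matrix.det_transpose, hdetT] at hdet
  have hd2 : ‖H.det‖ * ‖ψ 0‖ ^ (n * (n - 1)) ≤ (n.factorial : ℝ) * M ^ n := by
    have e1 : ‖ψ 0 ^ (∑ i ∈ Finset.range n, i) * (H.det * ψ 0 ^ (∑ i ∈ Finset.range n, i))‖ =
        ‖H.det‖ * ‖ψ 0‖ ^ (n * (n - 1)) := by
      rw [← Finset.sum_range_id_mul_two, pow_mul]
      simp only [norm_mul, norm_pow]; ring
    rw [← e1]
    have h9 : ‖ψ 0 ^ (∑ i ∈ Finset.range n, i) * (H.det * ψ 0 ^ (∑ i ∈ Finset.range n, i))‖ ≤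
        (Fintype.card (Fin n)).factorial • M ^ (Fintype.card (Fin n)) := hdet
    rw [Fintype.card_fin, nsmul_eq_mul] at h9
    exact h9
  have hlt : ‖H.det‖ < 1 := by
    have hp : 0 < ‖ψ 0‖ ^ (n * (n - 1)) := by positivity
    by_contra hge
    push Not at hge
    have := hN n hn
    nlinarith
  have hdetZ : H.det = ((Matrix.of fun i j : Fin n => c (i + j + 1)).det : ℤ) := by
    rw [← eq_intCast (Int.castRingHom ℂ), RingHom.map_det]
    rfl
  rw [hdetZ] at hlt ⊢
  rw [Complex.norm_intCast] at hlt
  have : |(Matrix.of fun i j : Fin n => c (i + j + 1)).det| < 1 := by exact_mod_cast hlt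
  rw [Int.abs_lt_one_iff.1 this]; simp
open Polynomial in
/-- Kronecker: if all large Hankel determinants vanish, there is a linear recurrence. -/
lemma kronecker (a : ℕ → ℂ) (N : ℕ)
    (hdet : ∀ n ≥ N, (Matrix.of fun i j : Fin n => a (i + j)).det = 0) :
    ∃ q : ℂ[X], q ≠ 0 ∧ ∀ m : ℕ, ∑ j ∈ Finset.range (q.natDegree + 1), q.coeff j * a (m + j) = 0 := by
  classical
  -- the linear functional
  set L : ℂ[X] →ₗ[ℂ] ℂ := Polynomial.lsum (fun n => LinearMap.mulRight ℂ (a n)) with hL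
  have Lmon : ∀ n (c : ℂ), L (monomial n c) = c * a n := by
    intro n c; simp [hL, Polynomial.lsum_apply]
  have Lexp : ∀ (p : ℂ[X]) (i n : ℕ), p.natDegree < n →
      L (p * X ^ i) = ∑ j ∈ Finset.range n, p.coeff j * a (i + j) := by
    intro p i n hn
    conv_lhs => rw [p.as_sum_range' n hn]
    rw [Finset.sum_mul, map_sum]
    refine Finset.sum_congr rfl fun j _ => ?_
    rw [monomial_mul_X_pow, Lmon, add_comm]
  -- kernel
  have ker : ∀ n, (Matrix.of fun i j : Fin n => a (i + j)).det = 0 ↔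
      ∃ V : ℂ[X], V ≠ 0 ∧ V.degree < n ∧ ∀ i < n, L (V * X ^ i) = 0 := by
    intro n
    rw [← Matrix.exists_mulVec_eq_zero_iff]
    constructor
    · rintro ⟨v, hv, hv0⟩
      set e := (Polynomial.degreeLTEquiv ℂ n)
      refine ⟨(e.symm v : degreeLT ℂ n), ?_, ?_, ?_⟩
      · intro h0
        apply hv
        have : e.symm v = 0 := Subtype.ext h0
        simpa using this
      · exact mem_degreeLT.1 (e.symm v).2
      · intro i hi
        have hd := mem_degreeLT.1 (e.symm v).2
        have hn : ((e.symm v : degreeLT ℂ n) : ℂ[X]).natDegree < n := by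
          by_cases h : ((e.symm v : degreeLT ℂ n) : ℂ[X]) = 0
          · rw [h]; simpa using by omega
          · exact (natDegree_lt_iff_degree_lt h).2 hd
        rw [Lexp _ i n hn, Finset.sum_range]
        have := congrFun hv0 ⟨i, hi⟩
        simp only [Matrix.mulVec, dotProduct, Matrix.of_apply, Pi.zero_apply] at this
        rw [← this]
        refine Finset.sum_congr rfl fun j _ => ?_
        have hc : ((e.symm v : degreeLT ℂ n) : ℂ[X]).coeff j = v j := by
          have := congrFun (e.apply_symm_apply v) j
          simpa [e, degreeLTEquiv] using this
        rw [hc, mul_comm]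
    · rintro ⟨V, hV, hVd, h⟩
      have hn := (natDegree_lt_iff_degree_lt hV).2 hVd
      refine ⟨fun j => V.coeff j, ?_, ?_⟩
      · intro h0
        have := congrFun h0 ⟨V.natDegree, hn⟩
        simp at this
        exact hV this
      · funext i
        have := h i i.2
        rw [Lexp _ i n hn, Finset.sum_range] at this
        simp only [Matrix.mulVec, dotProduct, Matrix.of_apply, Pi.zero_apply]
        rw [← this]
        exact Finset.sum_congr rfl fun j _ => mul_comm _ _
  -- maximal p with nonzero determinant
  obtain ⟨p, hp, hpmax⟩ : ∃ p, (Matrix.of fun i j : Fin p => a (i + j)).det ≠ 0 ∧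
      ∀ n, p < n → (Matrix.of fun i j : Fin n => a (i + j)).det = 0 := by
    have h0 : (Matrix.of fun i j : Fin 0 => a (i + j)).det ≠ 0 := by simp
    refine ⟨Nat.findGreatest (fun n => (Matrix.of fun i j : Fin n => a (i + j)).det ≠ 0) N,
      Nat.findGreatest_spec (P := fun n => (Matrix.of fun i j : Fin n => a (i + j)).det ≠ 0)
        (Nat.zero_le _) h0, ?_⟩
    intro n hn
    by_cases hnN : n ≤ N
    · have := Nat.findGreatest_is_greatest hn hnN
      simpa using this
    · exact hdet n (by omega)
  have nondeg : ∀ R : ℂ[X], R.degree < p → (∀ i < p, L (R * X ^ i) = 0) → R = 0 := by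
    intro R hR h
    by_contra hne
    exact hp ((ker p).2 ⟨R, hne, hR, h⟩)
  obtain ⟨q, hq0, hqd, hq⟩ := (ker (p+1)).1 (hpmax _ (Nat.lt_succ_self p))
  have hqn : q.natDegree < p + 1 := (natDegree_lt_iff_degree_lt hq0).2 hqd
  have hqp : q.natDegree = p := by
    by_contra hne
    exact hq0 (nondeg q ((natDegree_lt_iff_degree_lt hq0).1 (by omega)) fun i hi => hq i (by omega))
  have main : ∀ m, L (q * X ^ m) = 0 := by
    intro m
    induction m using Nat.strong_induction_on with
    | _ m ih =>
      by_cases hm : m ≤ p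
      · exact hq m (by omega)
      push Not at hm
      -- consequences of the induction hypothesis
      have ihS : ∀ S : ℂ[X], S.natDegree < m → L (q * S) = 0 := by
        intro S hS
        rw [S.as_sum_range' m hS, Finset.mul_sum, map_sum]
        refine Finset.sum_eq_zero fun j hj => ?_
        rw [← C_mul_X_pow_eq_monomial, mul_left_comm, ← smul_eq_C_mul, map_smul,
          ih j (Finset.mem_range.1 hj), smul_zero]
      obtain ⟨V, hV0, hVd, hV⟩ := (ker (m+1)).1 (hpmax _ (by omega))
      have hVn : V.natDegree < m + 1 := (natDegree_lt_iff_degree_lt hV0).2 hVd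
      have hdiv : q * (V / q) + V % q = V := EuclideanDomain.div_add_mod V q
      set S := V / q with hS
      set R := V % q with hR
      have hSd : S.natDegree + p ≤ m := by
        by_cases hVp : q.degree ≤ V.degree
        · have h := degree_add_div hq0 hVp
          have hS0 : V / q ≠ 0 := by
            intro h0
            rw [h0, degree_zero, WithBot.add_bot] at h
            exact hV0 (degree_eq_bot.1 h.symm)
          rw [degree_eq_natDegree hq0, degree_eq_natDegree hV0, degree_eq_natDegree hS0] at h
          have h' : q.natDegree + (V / q).natDegree = V.natDegree := by exact_mod_cast h
          rw [hS]; omega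
        · have : V / q = 0 := (Polynomial.div_eq_zero_iff hq0).2 (not_le.1 hVp)
          rw [hS, this]; simp; omega
      have hRd : R.degree < p := by
        have := degree_mod_lt V hq0
        rw [degree_eq_natDegree hq0, hqp] at this
        exact this
      have hR0 : R = 0 := by
        apply nondeg R hRd
        intro i hi
        have h1 : R * X ^ i = V * X ^ i - q * (S * X ^ i) := by
          rw [← hdiv]; ring
        rw [h1, map_sub, hV i (by omega), ihS, sub_zero]
        calc (S * X ^ i).natDegree ≤ S.natDegree + i := by
              refine natDegree_mul_le.trans ?_
              simp
          _ < m := by omega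
      have hVS : V = q * S := by rw [← hdiv, hR0, add_zero]
      have hS0 : S ≠ 0 := by rintro h; apply hV0; rw [hVS, h, mul_zero]
      have hsm : S.natDegree ≤ m := by omega
      have h2 := hV (m - S.natDegree) (by omega)
      set T := S * X ^ (m - S.natDegree) with hT
      have hTd : T.natDegree = m := by
        rw [hT, natDegree_mul_X_pow _ hS0]; omega
      have h3 : V * X ^ (m - S.natDegree) = q * T := by rw [hVS, hT]; ring
      have hT0 : T ≠ 0 := mul_ne_zero hS0 (pow_ne_zero _ X_ne_zero)
      rw [h3] at h2
      have h4 : T = T.eraseLead + C T.leadingCoeff * X ^ m := by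
        conv_lhs => rw [← T.eraseLead_add_C_mul_X_pow, hTd]
      have h5 : L (q * T.eraseLead) = 0 := by
        apply ihS
        have := T.eraseLead_natDegree_le
        omega
      rw [h4, mul_add, map_add, h5, zero_add, mul_left_comm, ← smul_eq_C_mul, map_smul,
        smul_eq_mul] at h2
      exact (mul_eq_zero.1 h2).resolve_left (leadingCoeff_ne_zero.2 hT0)
  refine ⟨q, hq0, fun m => ?_⟩
  rw [← Lexp q m _ (Nat.lt_succ_self _)]
  exact main m

open Polynomial in
lemma rational_of_rec (c : ℕ → ℂ) (q : ℂ[X]) (hq : q ≠ 0)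
    (hrec : ∀ m : ℕ, ∑ j ∈ Finset.range (q.natDegree + 1), q.coeff j * c (m + j + 1) = 0)
    (f : ℂ → ℂ) (hf : ∀ z : ℂ, ‖z‖ < 1 → HasSum (fun n => c n * z ^ n) (f z)) :
    ∃ p r : ℂ[X], r ≠ 0 ∧ ∀ z : ℂ, ‖z‖ < 1 → f z * r.eval z = p.eval z := by
  set d := q.natDegree with hd
  refine ⟨∑ j ∈ Finset.range (d+1), C (q.coeff j) * X ^ (d - j) *
      (∑ n ∈ Finset.range (j+1), C (c n) * X ^ n),
    ∑ j ∈ Finset.range (d+1), C (q.coeff j) * X ^ (d - j), ?_, ?_⟩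
  · intro h0
    have h1 := congrArg (fun r => Polynomial.eval 0 r) h0
    simp only [eval_finsetSum, eval_mul, eval_C, eval_pow, eval_X, eval_zero] at h1
    rw [Finset.sum_range_succ, Finset.sum_eq_zero] at h1
    · simp [hd] at h1; exact hq h1
    · intro j hj
      have := Finset.mem_range.1 hj
      rw [zero_pow (by omega), mul_zero]
  · intro z hz
    have h1 : ∀ j, HasSum (fun m => c (m + (j + 1)) * z ^ (m + (j+1)))
        (f z - ∑ n ∈ Finset.range (j+1), c n * z ^ n) := fun j => by
      exact (hasSum_nat_add_iff' (f := fun n => c n * z ^ n) (j+1)).2 (hf z hz)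
    have h2 : HasSum (fun m => ∑ j ∈ Finset.range (d+1), q.coeff j * z ^ (d - j) *
        (c (m + (j + 1)) * z ^ (m + (j+1))))
        (∑ j ∈ Finset.range (d+1), q.coeff j * z ^ (d - j) *
          (f z - ∑ n ∈ Finset.range (j+1), c n * z ^ n)) :=
      hasSum_sum fun j _ => (h1 j).mul_left _
    have h3 : (fun m => ∑ j ∈ Finset.range (d+1), q.coeff j * z ^ (d - j) *
        (c (m + (j + 1)) * z ^ (m + (j+1)))) = fun _ => 0 := by
      funext m
      rw [← mul_zero (z ^ (m + d + 1)), ← hrec m, Finset.mul_sum]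
      refine Finset.sum_congr rfl fun j hj => ?_
      have hj' := Finset.mem_range.1 hj
      have : z ^ (m + d + 1) = z ^ (d - j) * z ^ (m + (j + 1)) := by
        rw [← pow_add]; congr 1; omega
      rw [this, show m + (j+1) = m + j + 1 from rfl]; ring
    rw [h3] at h2
    have h4 := h2.unique hasSum_zero
    simp only [eval_finsetSum, eval_mul, eval_C, eval_pow, eval_X]
    simp only [mul_sub, Finset.sum_sub_distrib] at h4
    rw [sub_eq_zero] at h4
    rw [← h4, Finset.mul_sum]
    exact Finset.sum_congr rfl fun j _ => mul_comm _ _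
lemma seq_bound (b : ℕ → ℝ) (hb : ∀ n, 0 ≤ b n) (A r s : ℝ) (hA : 0 ≤ A) (hs : 0 < s) (hsr : s < r)
    (hrec : ∀ n : ℕ, (n + 1 : ℝ) * b (n+1) ≤
      A * ∑ k ∈ Finset.range (n+1), (1 / r ^ k) * b (n - k)) :
    ∃ C, ∀ n, b n * s ^ n ≤ C := by
  have hr : 0 < r := hs.trans hsr
  have hq0 : 0 ≤ s / r := by positivity
  have hq1 : s / r < 1 := (div_lt_one hr).2 hsr
  obtain ⟨N, hN⟩ := exists_nat_ge (A * s / (1 - s / r))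
  set C := ∑ k ∈ Finset.range (N+1), b k * s ^ k with hC
  have hC0 : 0 ≤ C := Finset.sum_nonneg fun k _ => mul_nonneg (hb k) (by positivity)
  refine ⟨C, fun n => ?_⟩
  induction n using Nat.strong_induction_on with
  | _ n ih =>
    by_cases hn : n ≤ N
    · exact Finset.single_le_sum (f := fun k => b k * s ^ k)
        (fun k _ => mul_nonneg (hb k) (by positivity)) (Finset.mem_range.2 (by omega))
    · obtain ⟨n, rfl⟩ : ∃ k, n = k + 1 := ⟨n - 1, by omega⟩
      have hNn : (N:ℝ) ≤ n := by exact_mod_cast (by omega : N ≤ n)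
      have h1 : (n + 1 : ℝ) * (b (n+1) * s ^ (n+1)) ≤ A * s * ∑ k ∈ Finset.range (n+1),
          (s / r) ^ k * (b (n - k) * s ^ (n - k)) := by
        calc (n + 1 : ℝ) * (b (n+1) * s ^ (n+1)) = ((n + 1 : ℝ) * b (n+1)) * s ^ (n+1) := by ring
          _ ≤ (A * ∑ k ∈ Finset.range (n+1), (1 / r ^ k) * b (n - k)) * s ^ (n+1) :=
            mul_le_mul_of_nonneg_right (hrec n) (by positivity)
          _ = _ := by
            rw [mul_assoc, mul_assoc, Finset.sum_mul, Finset.mul_sum, Finset.mul_sum,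
              Finset.mul_sum]
            refine Finset.sum_congr rfl fun k hk => ?_
            have : s ^ (n+1) = s * (s ^ k * s ^ (n - k)) := by
              rw [← pow_add, ← pow_succ']
              congr 1
              have := Finset.mem_range.1 hk
              omega
            rw [this, div_pow]; ring
      have h2 : ∑ k ∈ Finset.range (n+1), (s / r) ^ k * (b (n - k) * s ^ (n - k)) ≤
          (1 - s / r)⁻¹ * C := by
        calc _ ≤ ∑ k ∈ Finset.range (n+1), (s / r) ^ k * C := by
              refine Finset.sum_le_sum fun k _ => ?_
              exact mul_le_mul_of_nonneg_left (ih (n - k) (by omega)) (by positivity)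
          _ = (∑ k ∈ Finset.range (n+1), (s / r) ^ k) * C := (Finset.sum_mul _ _ _).symm
          _ ≤ _ := by
            refine mul_le_mul_of_nonneg_right ?_ hC0
            rw [← tsum_geometric_of_lt_one hq0 hq1]
            exact (summable_geometric_of_lt_one hq0 hq1).sum_le_tsum _
              (fun k _ => by positivity)
      have h3 : A * s * ((1 - s / r)⁻¹ * C) ≤ (n + 1) * C := by
        rw [← mul_assoc, ← div_eq_mul_inv]
        exact mul_le_mul_of_nonneg_right (by linarith) hC0
      have h4 : (n + 1 : ℝ) * (b (n+1) * s ^ (n+1)) ≤ (n + 1) * C :=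
        h1.trans ((mul_le_mul_of_nonneg_left h2 (by positivity)).trans h3)
      exact le_of_mul_le_mul_left h4 (by positivity)

lemma ode_extend {m : ℕ} (F : ℂ → Fin m → ℂ) (a : Fin m → Fin m → ℂ → ℂ) (z₀ : ℂ) (hz₀ : ‖z₀‖ < 1)
    (r s s' : ℝ) (hs' : 0 < s') (hss : s' < s) (hsr : s < r) (U : Set ℂ)
    (hU : IsOpen U) (hUr : Metric.closedBall z₀ r ⊆ U)
    (ha : ∀ i j, DifferentiableOn ℂ (a i j) U)
    (hode : ∀ (i : Fin m) (z : ℂ), ‖z‖ < 1 →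
      HasDerivAt (fun w : ℂ => F w i) (∑ j : Fin m, a i j z * F z j) z) (i : Fin m) :
    ∃ g : ℂ → ℂ, DifferentiableOn ℂ g (Metric.ball z₀ s') ∧
      ∀ z, ‖z‖ < 1 → z ∈ Metric.ball z₀ s' → F z i = g z := by
  have hs : 0 < s := hs'.trans hss
  have hr : 0 < r := hs.trans hsr
  have hFd : ∀ i, DifferentiableOn ℂ (fun w => F w i) (Metric.ball 0 1) := fun i z hz =>
    (hode i z (by simpa using hz)).differentiableAt.differentiableWithinAt
  have hball : Metric.ball (0:ℂ) 1 ∈ 𝓝 z₀ := Metric.isOpen_ball.mem_nhds (by simpa using hz₀)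
  have hFa : ∀ i, AnalyticAt ℂ (fun w => F w i) z₀ := fun i => (hFd i).analyticAt hball
  have hz₀U : z₀ ∈ U := hUr (by simp [hr.le])
  have haa : ∀ i j, AnalyticAt ℂ (a i j) z₀ := fun i j => (ha i j).analyticAt (hU.mem_nhds hz₀U)
  -- Cauchy bound for the coefficients of `a`
  obtain ⟨M, hM0, hM⟩ : ∃ M : ℝ, 0 ≤ M ∧ ∀ i j k, ‖iteratedDeriv k (a i j) z₀‖ ≤
      k.factorial * M / r ^ k := by
    have h1 : ∀ i j, ∃ M : ℝ, ∀ z ∈ Metric.sphere z₀ r, ‖a i j z‖ ≤ M := fun i j =>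
      (isCompact_sphere z₀ r).exists_bound_of_continuousOn
        ((ha i j).continuousOn.mono (Metric.sphere_subset_closedBall.trans hUr))
    choose M hM using h1
    refine ⟨∑ i, ∑ j, |M i j|, by positivity, fun i j k => ?_⟩
    refine Complex.norm_iteratedDeriv_le_of_forall_mem_sphere_norm_le k hr ?_ ?_
    · refine ((ha i j).mono ?_).diffContOnCl
      rw [closure_ball _ hr.ne']; exact hUr
    · intro z hz
      calc ‖a i j z‖ ≤ |M i j| := (hM i j z hz).trans (le_abs_self _)
        _ ≤ ∑ j, |M i j| := Finset.single_le_sum (f := fun j => |M i j|)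
            (fun _ _ => abs_nonneg _) (Finset.mem_univ j)
        _ ≤ _ := Finset.single_le_sum (f := fun i => ∑ j, |M i j|)
            (fun _ _ => Finset.sum_nonneg fun _ _ => abs_nonneg _) (Finset.mem_univ i)
  set B : Fin m → ℕ → ℝ := fun i n => ‖iteratedDeriv n (fun w => F w i) z₀‖ / n.factorial with hB
  set b : ℕ → ℝ := fun n => ∑ i, B i n with hb
  have hB0 : ∀ i n, 0 ≤ B i n := fun i n => by simp only [hB]; positivity
  have hb0 : ∀ n, 0 ≤ b n := fun n => Finset.sum_nonneg fun i _ => hB0 i n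
  have hderiv : ∀ i n, iteratedDeriv (n+1) (fun w => F w i) z₀ = ∑ j, ∑ k ∈ Finset.range (n+1),
      n.choose k * iteratedDeriv k (a i j) z₀ * iteratedDeriv (n - k) (fun w => F w j) z₀ := by
    intro i n
    rw [iteratedDeriv_succ']
    have he : deriv (fun w => F w i) =ᶠ[𝓝 z₀] fun z => ∑ j, a i j z * F z j := by
      filter_upwards [hball] with z hz
      exact (hode i z (by simpa using hz)).deriv
    rw [he.iteratedDeriv_eq n, iteratedDeriv_fun_sum]
    · refine Finset.sum_congr rfl fun j _ => ?_
      exact iteratedDeriv_fun_mul (haa i j).contDiffAt (hFa j).contDiffAt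
    · intro j _
      exact ((haa i j).mul (hFa j)).contDiffAt
  have hBrec : ∀ i (n : ℕ), (n + 1 : ℝ) * B i (n+1) ≤
      M * ∑ k ∈ Finset.range (n+1), (1 / r ^ k) * b (n - k) := by
    intro i n
    have hfn : (0:ℝ) < n.factorial := by exact_mod_cast n.factorial_pos
    have e1 : (n + 1 : ℝ) * B i (n+1) =
        ‖iteratedDeriv (n+1) (fun w => F w i) z₀‖ / n.factorial := by
      simp only [hB, Nat.factorial_succ]
      push_cast
      field_simp
    rw [e1, hderiv, div_le_iff₀ hfn]
    calc _ ≤ ∑ j, ∑ k ∈ Finset.range (n+1), (n.choose k : ℝ) * (k.factorial * M / r ^ k) *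
          (B j (n-k) * (n - k).factorial) := by
          refine (norm_sum_le _ _).trans (Finset.sum_le_sum fun j _ => ?_)
          refine (norm_sum_le _ _).trans (Finset.sum_le_sum fun k _ => ?_)
          rw [norm_mul, norm_mul, Complex.norm_natCast]
          have e2 : B j (n-k) * (n - k).factorial =
              ‖iteratedDeriv (n - k) (fun w => F w j) z₀‖ := by
            simp only [hB]
            exact div_mul_cancel₀ _ (by exact_mod_cast (n-k).factorial_ne_zero)
          rw [e2]
          gcongr
          exact hM i j k
      _ = ∑ k ∈ Finset.range (n+1), ∑ j, (n.choose k : ℝ) * (k.factorial * M / r ^ k) *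
          (B j (n-k) * (n - k).factorial) := Finset.sum_comm
      _ = _ := by
          rw [Finset.mul_sum, Finset.sum_mul]
          refine Finset.sum_congr rfl fun k hk => ?_
          have hkn : k ≤ n := by have := Finset.mem_range.1 hk; omega
          have e3 : (n.factorial : ℝ) = n.choose k * k.factorial * (n - k).factorial := by
            exact_mod_cast (Nat.choose_mul_factorial_mul_factorial hkn).symm
          rw [e3]
          simp only [hb]
          rw [Finset.mul_sum, Finset.mul_sum, Finset.sum_mul]
          refine Finset.sum_congr rfl fun j _ => ?_
          ring
  obtain ⟨C, hC⟩ := seq_bound b hb0 (m * M) r s (by positivity) hs hsr (by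
    intro n
    simp only [hb]
    rw [Finset.mul_sum]
    refine (Finset.sum_le_sum fun i _ => hBrec i n).trans ?_
    simp [mul_assoc, hb])
  -- the extension
  set t : ℕ → ℂ → ℂ := fun n z =>
    ((n.factorial : ℂ)⁻¹ • (z - z₀) ^ n • iteratedDeriv n (fun w => F w i) z₀) with ht
  have hgd : DifferentiableOn ℂ (fun z => ∑' n, t n z) (Metric.ball z₀ s') := by
    refine Complex.differentiableOn_tsum_of_summable_norm (u := fun n => C * (s' / s) ^ n) ?_ ?_
      Metric.isOpen_ball ?_
    · exact (summable_geometric_of_lt_one (by positivity) ((div_lt_one hs).2 hss)).mul_left C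
    · intro n
      simp only [ht]
      fun_prop
    · intro n z hz
      have hz' : ‖z - z₀‖ ≤ s' := by
        have := Metric.mem_ball.1 hz
        rw [dist_eq_norm] at this
        exact this.le
      have h1 : ‖t n z‖ = ‖z - z₀‖ ^ n * B i n := by
        simp only [ht, hB, norm_smul, norm_inv, norm_pow, Complex.norm_natCast]
        ring
      have h2 : B i n * s ^ n ≤ C := by
        refine le_trans ?_ (hC n)
        refine mul_le_mul_of_nonneg_right ?_ (by positivity)
        exact Finset.single_le_sum (f := fun i => B i n) (fun i _ => hB0 i n) (Finset.mem_univ i)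
      rw [h1]
      calc ‖z - z₀‖ ^ n * B i n ≤ s' ^ n * B i n :=
            mul_le_mul_of_nonneg_right (pow_le_pow_left₀ (norm_nonneg _) hz' n) (hB0 i n)
        _ = (B i n * s ^ n) * (s' / s) ^ n := by
            rw [div_pow]; field_simp
        _ ≤ _ := mul_le_mul_of_nonneg_right h2 (by positivity)
  refine ⟨fun z => ∑' n, t n z, hgd, ?_⟩
  set V : Set ℂ := Metric.ball 0 1 ∩ Metric.ball z₀ s' with hV
  have hVo : IsOpen V := Metric.isOpen_ball.inter Metric.isOpen_ball
  have hVc : IsPreconnected V :=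
    ((convex_ball _ _).inter (convex_ball _ _)).isPreconnected
  have hev : (fun w => F w i) =ᶠ[𝓝 z₀] fun z => ∑' n, t n z := by
    have hsub : Metric.ball z₀ (1 - ‖z₀‖) ⊆ Metric.ball 0 1 := by
      apply Metric.ball_subset_ball'
      simp
    filter_upwards [Metric.ball_mem_nhds z₀ (sub_pos.2 hz₀)] with z hz
    exact (Complex.hasSum_taylorSeries_on_ball ((hFd i).mono hsub) hz).tsum_eq.symm
  have heq := AnalyticOnNhd.eqOn_of_preconnected_of_eventuallyEq
    (((hFd i).mono Set.inter_subset_left).analyticOnNhd hVo)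
    ((hgd.mono Set.inter_subset_right).analyticOnNhd hVo) hVc
    (⟨by simpa using hz₀, by simpa using hs'⟩ : z₀ ∈ V) hev
  intro z hz hz2
  exact heq ⟨by simpa using hz, hz2⟩
/-- corollary of the Carlson–Pólya theorem: Let
`F = (F_i)` be a vector of power series with integer coefficients `c n i`,
convergent for `|z| < 1`, satisfying a linear ODE `F' = A F` where
`A(z) = (P_{ij}(z)/Q_{ij}(z))` is a matrix of rational functions over `ℚ`
regular for `|z| < 1`.  Then each component `F_i` is a rational function. -/
theorem carlson_polya_ode_rational {m : ℕ} (c : ℕ → Fin m → ℤ)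
    (F : ℂ → Fin m → ℂ) (P Q : Fin m → Fin m → Polynomial ℚ)
    (hQ0 : ∀ i j, Q i j ≠ 0)
    (hQreg : ∀ (i j : Fin m) (z : ℂ), ‖z‖ < 1 →
      ((Q i j).map (algebraMap ℚ ℂ)).eval z ≠ 0)
    (hsum : ∀ (i : Fin m) (z : ℂ), ‖z‖ < 1 →
      HasSum (fun n : ℕ => (c n i : ℂ) * z ^ n) (F z i))
    (hode : ∀ (i : Fin m) (z : ℂ), ‖z‖ < 1 →
      HasDerivAt (fun w : ℂ => F w i)
        (∑ j : Fin m, ((P i j).map (algebraMap ℚ ℂ)).eval z /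
          ((Q i j).map (algebraMap ℚ ℂ)).eval z * F z j) z) :
    ∀ i : Fin m, ∃ p q : Polynomial ℂ, q ≠ 0 ∧
      ∀ z : ℂ, ‖z‖ < 1 → F z i * q.eval z = p.eval z := by
  intro i
  -- the pole set
  set R : Polynomial ℂ := ∏ i, ∏ j, (Q i j).map (algebraMap ℚ ℂ) with hR
  have hR0 : R ≠ 0 := Finset.prod_ne_zero_iff.2 fun i _ => Finset.prod_ne_zero_iff.2 fun j _ =>
    (Polynomial.map_ne_zero_iff (algebraMap ℚ ℂ).injective).2 (hQ0 i j)
  have hRQ : ∀ z, R.eval z ≠ 0 → ∀ i j, ((Q i j).map (algebraMap ℚ ℂ)).eval z ≠ 0 := by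
    intro z hz i j
    rw [hR, Polynomial.eval_prod] at hz
    have h1 := Finset.prod_ne_zero_iff.1 hz i (Finset.mem_univ i)
    rw [Polynomial.eval_prod] at h1
    exact Finset.prod_ne_zero_iff.1 h1 j (Finset.mem_univ j)
  obtain ⟨ζ, hζ, hζR⟩ : ∃ ζ : ℂ, ‖ζ‖ = 1 ∧ R.eval ζ ≠ 0 := by
    have hinf : (Metric.sphere (0:ℂ) 1).Infinite := by
      apply Set.Infinite.mono (s := (fun x : ℝ => Complex.exp (x * Complex.I)) '' Set.Icc 0 1)
      · rintro _ ⟨x, _, rfl⟩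
        simp [Complex.norm_exp_ofReal_mul_I]
      · refine (Set.Icc_infinite zero_lt_one).image ?_
        intro x hx y hy hxy
        have h1 := congrArg Complex.re hxy
        simp only [Complex.exp_ofReal_mul_I_re] at h1
        have hpi := Real.pi_gt_three
        exact Real.injOn_cos ⟨hx.1, by linarith [hx.2]⟩ ⟨hy.1, by linarith [hy.2]⟩ h1
    obtain ⟨ζ, h1, h2⟩ := hinf.exists_notMem_finset R.roots.toFinset
    refine ⟨ζ, by simpa using h1, fun h => h2 ?_⟩
    rw [Multiset.mem_toFinset, Polynomial.mem_roots hR0]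
    exact h
  set U : Set ℂ := {z | R.eval z ≠ 0} with hU
  have hUo : IsOpen U := isOpen_ne_fun R.continuous continuous_const
  obtain ⟨δ, hδ, hδU⟩ := Metric.isOpen_iff.1 hUo ζ hζR
  set η : ℝ := min (δ / 4) (1 / 2) with hη
  have hη0 : 0 < η := lt_min (by linarith) (by norm_num)
  have hη1 : η ≤ 1 / 2 := min_le_right _ _
  have hηδ : 4 * η ≤ δ := by have := min_le_left (δ / 4) (1 / 2 : ℝ); linarith
  set z₀ : ℂ := ((1 - η : ℝ) : ℂ) * ζ with hz₀
  have hz₀n : ‖z₀‖ = 1 - η := by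
    rw [hz₀, norm_mul, hζ, mul_one, Complex.norm_real, Real.norm_of_nonneg (by linarith)]
  have hdist : dist ζ z₀ = η := by
    rw [dist_eq_norm, show ζ - z₀ = ((η : ℝ) : ℂ) * ζ by rw [hz₀]; push_cast; ring, norm_mul, hζ,
      mul_one, Complex.norm_real, Real.norm_of_nonneg hη0.le]
  obtain ⟨g, hg, hgF⟩ := ode_extend F
    (fun i j z => ((P i j).map (algebraMap ℚ ℂ)).eval z / ((Q i j).map (algebraMap ℚ ℂ)).eval z)
    z₀ (by rw [hz₀n]; linarith) (2 * η) (7 / 4 * η) (3 / 2 * η) (by linarith) (by linarith)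
    (by linarith) U hUo (by
      refine Set.Subset.trans ?_ hδU
      intro z hz
      have h1 := Metric.mem_closedBall.1 hz
      have h2 := dist_triangle z z₀ ζ
      rw [dist_comm z₀ ζ, hdist] at h2
      exact Metric.mem_ball.2 (by linarith))
    (by
      intro i j z hz
      have h1 : DifferentiableAt ℂ (fun w => ((P i j).map (algebraMap ℚ ℂ)).eval w) z :=
        (Polynomial.differentiable _).differentiableAt
      have h2 : DifferentiableAt ℂ (fun w => ((Q i j).map (algebraMap ℚ ℂ)).eval w) z :=
        (Polynomial.differentiable _).differentiableAt
      exact (DifferentiableAt.fun_div h1 h2 (hRQ z hz i j)).differentiableWithinAt)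
    hode i
  classical
  set f : ℂ → ℂ := fun z => if ‖z‖ < 1 then F z i else g z with hf
  have hfg : ∀ z ∈ Metric.ball z₀ (3 / 2 * η), f z = g z := by
    intro z hz
    by_cases h : ‖z‖ < 1
    · simp only [hf, if_pos h]; exact hgF z h hz
    · simp only [hf, if_neg h]
  have hfF : ∀ z, ‖z‖ < 1 → f z = F z i := fun z hz => by simp only [hf, if_pos hz]
  have hfd : DifferentiableOn ℂ f (Metric.ball 0 1 ∪ Metric.ball ζ (η / 2)) := by
    intro z hz
    apply DifferentiableAt.differentiableWithinAt
    rcases hz with hz | hz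
    · have he : f =ᶠ[𝓝 z] fun w => F w i := by
        filter_upwards [Metric.isOpen_ball.mem_nhds hz] with w hw
        exact hfF w (by simpa using hw)
      exact he.differentiableAt_iff.2 (hode i z (by simpa using hz)).differentiableAt
    · have hz2 : z ∈ Metric.ball z₀ (3 / 2 * η) := by
        have h1 := Metric.mem_ball.1 hz
        have h2 := dist_triangle z ζ z₀
        rw [hdist] at h2
        exact Metric.mem_ball.2 (by linarith)
      have he : f =ᶠ[𝓝 z] g := by
        filter_upwards [Metric.isOpen_ball.mem_nhds hz2] with w hw
        exact hfg w hw
      exact he.differentiableAt_iff.2 (hg.differentiableAt (Metric.isOpen_ball.mem_nhds hz2))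
  have hfs : ∀ z : ℂ, ‖z‖ < 1 → HasSum (fun n : ℕ => (c n i : ℂ) * z ^ n) (f z) := by
    intro z hz
    rw [hfF z hz]; exact hsum i z hz
  obtain ⟨N, hN⟩ := hankel_vanish (fun n => c n i) f ζ hζ (η / 2) (by linarith) hfd hfs
  obtain ⟨q, hq, hrec⟩ := kronecker (fun n => (c (n + 1) i : ℂ)) N hN
  exact rational_of_rec (fun n => (c n i : ℂ)) q hq hrec (fun z => F z i) (hsum i)
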